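/- Let α ∈ ℂ be an algebraic number of degree d over ℚ, let β ∈ ℚ(α) be irrational, let P, Q be a minimal pair for (α, β), and let W = P·Q′ − Q·P′ be the Wronskian of P and Q. Then W(α) ≠ 0, and there exists a positive real number C₁₃, depending only on α and β, such that |W(α)| ≥ C₁₃. -/

import Mathlib

open Polynomial

/-- The height `H(P)` of an integer polynomial: the maximum of the absolute values of
its coefficients (as a natural number; `H(0) = 0`). -/
def polyHeight (P : Polynomial ℤ) : ℕ := P.support.sup fun i => (P.coeff i).natAbs

/-- `P, Q ∈ ℤ[x]`, not both identically zero, form a *minimal pair* for `(α, β)` if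
(1) `P, Q ∈ ℤ[x]`; (2) `P(α) + β·Q(α) = 0`; (3) `max (deg P, deg Q)` is minimal among
all pairs satisfying (1) and (2); (4) `max (H(P), H(Q))` is minimal among all pairs
satisfying (1), (2) and (3). -/
def IsMinimalPair {R : Type*} [CommRing R] (α β : R) (P Q : Polynomial ℤ) : Prop :=
  (¬(P = 0 ∧ Q = 0)) ∧
  (Polynomial.aeval α P + β * Polynomial.aeval α Q = 0) ∧
  (∀ P' Q' : Polynomial ℤ, ¬(P' = 0 ∧ Q' = 0) →
    Polynomial.aeval α P' + β * Polynomial.aeval α Q' = 0 →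
    max P.natDegree Q.natDegree ≤ max P'.natDegree Q'.natDegree) ∧
  (∀ P' Q' : Polynomial ℤ, ¬(P' = 0 ∧ Q' = 0) →
    Polynomial.aeval α P' + β * Polynomial.aeval α Q' = 0 →
    max P'.natDegree Q'.natDegree = max P.natDegree Q.natDegree →
    max (polyHeight P) (polyHeight Q) ≤ max (polyHeight P') (polyHeight Q'))

/-!
Since `P(α) = -β Q(α)`, the Wronskian at `α` factors as `W(α) = -Q(α) (P'(α) + β Q'(α))`.

* `Q(α) ≠ 0`: otherwise `P(α) = 0` as well, so `α` is algebraic, and the nonzero one of `P`, `Q` has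
  degree at least `deg α`. But writing `β` as a rational polynomial in `α` of degree less than
  `deg α` and clearing denominators gives a relation of smaller degree.
* `P'(α) + β Q'(α) ≠ 0`: otherwise `(P', Q')` is a relation of smaller degree, so `P' = Q' = 0` and
  `β` is a quotient of two integers.

All minimal pairs have the same degree and the same height, so there are only finitely many of
them, and `|W(α)|` is bounded below by a positive constant.
-/

lemma exists_pos_forall_mem_le {ι R : Type*} [Zero R] [LinearOrder R] [NoMaxOrder R]
    {s : Set ι} (hs : s.Finite) {f : ι → R} (hf : ∀ i ∈ s, 0 < f i) :
    ∃ c, 0 < c ∧ ∀ i ∈ s, c ≤ f i := by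
  rcases s.eq_empty_or_nonempty with rfl | hne
  · obtain ⟨c, hc⟩ := exists_gt (0 : R)
    exact ⟨c, hc, by simp⟩
  · obtain ⟨i, hi, hmin⟩ := Set.exists_min_image s f hs hne
    exact ⟨f i, hf i hi, hmin⟩

lemma finite_setOf_natDegree_le_coeff_mem {R : Type*} [Semiring R] (n : ℕ) {s : Set R}
    (hs : s.Finite) : {p : R[X] | p.natDegree ≤ n ∧ ∀ i, p.coeff i ∈ s}.Finite := by
  classical
  refine ((Set.Finite.pi' fun _ : Fin (n + 1) => hs).image (ofFn (n + 1))).subset ?_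
  rintro p ⟨hdeg, hcoeff⟩
  exact ⟨toFn (n + 1) p, fun i => hcoeff i,
    ofFn_comp_toFn_eq_id_of_natDegree_lt (Nat.lt_succ_of_le hdeg)⟩

lemma natAbs_coeff_le_polyHeight (P : ℤ[X]) (i : ℕ) : (P.coeff i).natAbs ≤ polyHeight P := by
  by_cases hi : i ∈ P.support
  · exact Finset.le_sup (f := fun i => (P.coeff i).natAbs) hi
  · simp [notMem_support_iff.mp hi]

lemma finite_setOf_natDegree_le_polyHeight_le (n h : ℕ) :
    {P : ℤ[X] | P.natDegree ≤ n ∧ polyHeight P ≤ h}.Finite := by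
  refine (finite_setOf_natDegree_le_coeff_mem n (Set.finite_Icc (-(h : ℤ)) h)).subset ?_
  rintro P ⟨hdeg, hheight⟩
  refine ⟨hdeg, fun i => ?_⟩
  have := natAbs_coeff_le_polyHeight P i
  rw [Set.mem_Icc]
  omega

lemma natDegree_minpoly_le_of_aeval_eq_zero {R F A : Type*} [CommRing R] [Field F] [Ring A]
    [Algebra R F] [FaithfulSMul R F] [Algebra R A] [Algebra F A] [IsScalarTower R F A]
    {x : A} {p : R[X]} (hp : p ≠ 0) (hx : aeval x p = 0) :
    (minpoly F x).natDegree ≤ p.natDegree := by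
  have hinj := FaithfulSMul.algebraMap_injective R F
  rw [← natDegree_map_eq_of_injective hinj p]
  exact natDegree_le_natDegree <| minpoly.degree_le_of_ne_zero F x
    ((Polynomial.map_ne_zero_iff hinj).mpr hp) (by rwa [aeval_map_algebraMap])

lemma exists_aeval_eq_smul_aeval (R A : Type*) {F : Type*} [CommRing R] [Field F] [Semiring A]
    [Algebra R F] [IsFractionRing R F] [Algebra R A] [Algebra F A] [IsScalarTower R F A]
    (f : F[X]) :
    ∃ b : R, b ≠ 0 ∧ ∃ p : R[X], p.natDegree ≤ f.natDegree ∧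
      ∀ x : A, aeval x p = b • aeval x f := by
  have := (algebraMap R F).domain_nontrivial
  obtain ⟨b, hb, hmap⟩ := IsLocalization.integerNormalization_spec (nonZeroDivisors R) f
  refine ⟨b, nonZeroDivisors.ne_zero hb,
    IsLocalization.integerNormalization (nonZeroDivisors R) f, ?_, fun x => ?_⟩
  · exact natDegree_le_natDegree <| degree_mono <|
      IsLocalization.integerNormalization_support (nonZeroDivisors R) f
  · rw [← aeval_map_algebraMap F, hmap, ← algebraMap_smul F b f, map_smul, algebraMap_smul]

lemma exists_aeval_eq_smul_of_mem_adjoin_simple (R : Type*) {F K : Type*} [CommRing R] [Field F]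
    [Field K] [Algebra R F] [IsFractionRing R F] [Algebra R K] [Algebra F K]
    [IsScalarTower R F K] {x y : K} (hx : IsIntegral F x)
    (hy : y ∈ IntermediateField.adjoin F {x}) :
    ∃ b : R, b ≠ 0 ∧ ∃ p : R[X], p.natDegree < (minpoly F x).natDegree ∧ aeval x p = b • y := by
  obtain ⟨f, hdeg, hf⟩ := (IntermediateField.adjoin.powerBasis hx).exists_eq_aeval ⟨y, hy⟩
  have hfy : aeval x f = y := by
    simpa using (congrArg (algebraMap _ K) hf).symm
  obtain ⟨b, hb, p, hpf, hp⟩ := exists_aeval_eq_smul_aeval R K f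
  exact ⟨b, hb, p, hpf.trans_lt hdeg, by rw [hp, hfy]⟩

lemma max_natDegree_derivative_lt {R : Type*} [Semiring R] {P Q : R[X]}
    (h : max P.natDegree Q.natDegree ≠ 0) :
    max P.derivative.natDegree Q.derivative.natDegree < max P.natDegree Q.natDegree := by
  have hP := natDegree_derivative_le P
  have hQ := natDegree_derivative_le Q
  omega

lemma aeval_wronskian_eq_neg_mul {R A : Type*} [CommRing R] [CommRing A] [Algebra R A] {α β : A}
    {P Q : R[X]} (h : aeval α P + β * aeval α Q = 0) :
    aeval α (wronskian P Q) =
      -(aeval α Q * (aeval α P.derivative + β * aeval α Q.derivative)) := by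
  simp only [wronskian, map_sub, map_mul]
  linear_combination aeval α Q.derivative * h

lemma exists_ratCast_eq_of_intCast_add_mul_eq_zero {K : Type*} [Field K] [CharZero K] {β : K}
    {a b : ℤ} (hab : ¬(a = 0 ∧ b = 0)) (h : (a : K) + β * b = 0) : ∃ q : ℚ, (q : K) = β := by
  have hb : b ≠ 0 := by
    rintro rfl
    exact hab ⟨by simpa using h, rfl⟩
  have hbK : (b : K) ≠ 0 := Int.cast_ne_zero.mpr hb
  refine ⟨-a / b, ?_⟩
  push_cast
  rw [div_eq_iff hbK]
  linear_combination -h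

namespace IsMinimalPair

section CommRing

variable {A : Type*} [CommRing A] {α β : A} {P Q P' Q' : ℤ[X]}

lemma max_natDegree_eq (h : IsMinimalPair α β P Q) (h' : IsMinimalPair α β P' Q') :
    max P.natDegree Q.natDegree = max P'.natDegree Q'.natDegree :=
  le_antisymm (h.2.2.1 P' Q' h'.1 h'.2.1) (h'.2.2.1 P Q h.1 h.2.1)

lemma max_polyHeight_eq (h : IsMinimalPair α β P Q) (h' : IsMinimalPair α β P' Q') :
    max (polyHeight P) (polyHeight Q) = max (polyHeight P') (polyHeight Q') :=
  le_antisymm (h.2.2.2 P' Q' h'.1 h'.2.1 (h'.max_natDegree_eq h))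
    (h'.2.2.2 P Q h.1 h.2.1 (h.max_natDegree_eq h'))

variable (α β) in
lemma finite_setOf : {p : ℤ[X] × ℤ[X] | IsMinimalPair α β p.1 p.2}.Finite := by
  refine Set.not_infinite.mp fun hinf => hinf ?_
  obtain ⟨⟨P₀, Q₀⟩, h₀⟩ := hinf.nonempty
  have hfin := finite_setOf_natDegree_le_polyHeight_le (max P₀.natDegree Q₀.natDegree)
    (max (polyHeight P₀) (polyHeight Q₀))
  refine (hfin.prod hfin).subset ?_
  rintro ⟨P, Q⟩ h
  have hdeg := max_natDegree_eq h h₀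
  have hheight := max_polyHeight_eq h h₀
  exact ⟨⟨le_of_max_le_left hdeg.le, le_of_max_le_left hheight.le⟩,
    ⟨le_of_max_le_right hdeg.le, le_of_max_le_right hheight.le⟩⟩

end CommRing

variable {K : Type*} [Field K] [CharZero K] {α β : K} {P Q : ℤ[X]}

lemma max_natDegree_lt_natDegree_minpoly (h : IsMinimalPair α β P Q) (hα : IsIntegral ℚ α)
    (hβ : β ∈ IntermediateField.adjoin ℚ {α}) :
    max P.natDegree Q.natDegree < (minpoly ℚ α).natDegree := by
  obtain ⟨b, hb, p, hdeg, hp⟩ := exists_aeval_eq_smul_of_mem_adjoin_simple ℤ hα hβ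
  have hrel : aeval α (-p) + β * aeval α (C b) = 0 := by
    rw [map_neg, hp, aeval_C, Algebra.smul_def]
    ring
  calc max P.natDegree Q.natDegree
      ≤ max (-p).natDegree (C b).natDegree := h.2.2.1 _ _ (fun h0 => hb (C_eq_zero.mp h0.2)) hrel
    _ < (minpoly ℚ α).natDegree := by simpa using hdeg

lemma aeval_right_ne_zero (h : IsMinimalPair α β P Q)
    (hβ : β ∈ IntermediateField.adjoin ℚ {α}) : aeval α Q ≠ 0 := by
  intro hQ
  have hP : aeval α P = 0 := by simpa [hQ] using h.2.1
  obtain ⟨S, hS, hSα, hSdeg⟩ :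
      ∃ S : ℤ[X], S ≠ 0 ∧ aeval α S = 0 ∧ S.natDegree ≤ max P.natDegree Q.natDegree := by
    rcases not_and_or.mp h.1 with hP0 | hQ0
    · exact ⟨P, hP0, hP, le_max_left _ _⟩
    · exact ⟨Q, hQ0, hQ, le_max_right _ _⟩
  have hα : IsAlgebraic ℚ α :=
    IsAlgebraic.extendScalars (algebraMap ℤ ℚ).injective_int ⟨S, hS, hSα⟩
  have hdeg_lt := h.max_natDegree_lt_natDegree_minpoly hα.isIntegral hβ
  have hdeg_le := natDegree_minpoly_le_of_aeval_eq_zero (F := ℚ) hS hSα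
  exact (hdeg_le.trans hSdeg).not_gt hdeg_lt

lemma max_natDegree_ne_zero (h : IsMinimalPair α β P Q) (hβ : ∀ q : ℚ, (q : K) ≠ β) :
    max P.natDegree Q.natDegree ≠ 0 := by
  intro hdeg
  obtain ⟨a, rfl⟩ := natDegree_eq_zero.mp (Nat.le_zero.mp (le_of_max_le_left hdeg.le))
  obtain ⟨b, rfl⟩ := natDegree_eq_zero.mp (Nat.le_zero.mp (le_of_max_le_right hdeg.le))
  have hab : ¬(a = 0 ∧ b = 0) := by simpa only [C_eq_zero] using h.1
  have hrel : (a : K) + β * b = 0 := by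
    simpa only [aeval_C, algebraMap_int_eq, Int.coe_castRingHom] using h.2.1
  obtain ⟨q, hq⟩ := exists_ratCast_eq_of_intCast_add_mul_eq_zero hab hrel
  exact hβ q hq

lemma aeval_derivative_add_mul_ne_zero (h : IsMinimalPair α β P Q)
    (hβ : ∀ q : ℚ, (q : K) ≠ β) : aeval α P.derivative + β * aeval α Q.derivative ≠ 0 := by
  intro hrel
  have hdeg := h.max_natDegree_ne_zero hβ
  have hne : ¬(P.derivative = 0 ∧ Q.derivative = 0) := by
    rw [derivative_eq_zero, derivative_eq_zero]
    omega
  exact (h.2.2.1 _ _ hne hrel).not_gt (max_natDegree_derivative_lt hdeg)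

lemma aeval_wronskian_ne_zero (h : IsMinimalPair α β P Q)
    (hβmem : β ∈ IntermediateField.adjoin ℚ {α}) (hβirr : ∀ q : ℚ, (q : K) ≠ β) :
    aeval α (wronskian P Q) ≠ 0 := by
  rw [aeval_wronskian_eq_neg_mul h.2.1]
  exact neg_ne_zero.mpr
    (mul_ne_zero (h.aeval_right_ne_zero hβmem) (h.aeval_derivative_add_mul_ne_zero hβirr))

end IsMinimalPair

theorem minimal_pair_wronskian_lower_bound_general {K : Type*} [NormedField K] [CharZero K]
    {α β : K} (hβmem : β ∈ IntermediateField.adjoin ℚ {α}) (hβirr : ∀ q : ℚ, (q : K) ≠ β) :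
    (∀ P Q : ℤ[X], IsMinimalPair α β P Q → aeval α (wronskian P Q) ≠ 0) ∧
    ∃ c : ℝ, 0 < c ∧ ∀ P Q : ℤ[X], IsMinimalPair α β P Q → c ≤ ‖aeval α (wronskian P Q)‖ := by
  have hne (P Q : ℤ[X]) (h : IsMinimalPair α β P Q) : aeval α (wronskian P Q) ≠ 0 :=
    h.aeval_wronskian_ne_zero hβmem hβirr
  obtain ⟨c, hc, hle⟩ := exists_pos_forall_mem_le (IsMinimalPair.finite_setOf α β)
    (f := fun p => ‖aeval α (wronskian p.1 p.2)‖) fun p hp => norm_pos_iff.mpr (hne p.1 p.2 hp)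
  exact ⟨hne, c, hc, fun P Q h => hle (P, Q) h⟩

/-- Let `α ∈ ℂ` be an algebraic number of degree `d` over `ℚ`, let `β ∈ ℚ(α)` be
irrational, let `P, Q` be a minimal pair for `(α, β)` and let
`W = P·Q′ − Q·P′` be the Wronskian of `P` and `Q`. Then `W(α) ≠ 0`, and there exists
a positive real `C₁₃`, depending only on `α` and `β`, such that `|W(α)| ≥ C₁₃`. -/
theorem minimal_pair_wronskian_lower_bound
    (α : ℂ) (hα : IsAlgebraic ℚ α) (d : ℕ) (hdeg : (minpoly ℚ α).natDegree = d)
    (β : ℂ) (hβmem : β ∈ Algebra.adjoin ℚ {α}) (hβirr : ∀ q : ℚ, (q : ℂ) ≠ β) :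
    (∀ P Q : Polynomial ℤ, IsMinimalPair α β P Q →
      Polynomial.aeval α (P * Q.derivative - Q * P.derivative) ≠ 0) ∧
    ∃ C₁₃ : ℝ, 0 < C₁₃ ∧
      ∀ P Q : Polynomial ℤ, IsMinimalPair α β P Q →
        C₁₃ ≤ ‖Polynomial.aeval α (P * Q.derivative - Q * P.derivative)‖ := by
  simpa only [wronskian, mul_comm (derivative _) _] using
    minimal_pair_wronskian_lower_bound_general
      (IntermediateField.algebra_adjoin_le_adjoin ℚ _ hβmem) hβirr
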